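/- Fix a real number c with 0 ≤ c < 1. Let ξ∨ be the unique zero of g₁ in I = (ξ_min, ξ_max) and η∨ = (27ξ∨² + 10cξ∨ + 3c² − 40)/(8√(1−c²)). Then ψ(t, ξ∨, η∨) ≤ 0 for all t ∈ [−1,1], and for every pair (ξ, η) with ξ > 0 such that ψ(t, ξ, η) ≤ 0 for all t ∈ [−1,1], sup over t ∈ [−1,1] of |ψ(t, ξ, η)| is at least sup over t ∈ [−1,1] of |ψ(t, ξ∨, η∨)|; i.e., (ξ∨, η∨) induces the optimal inner cubic G⁰ approximant. -/

import Mathlib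

/-- Simplified radial error of the cubic G⁰ Bézier approximant of the unit circular arc. -/
noncomputable def psiC (c t ξ η : ℝ) : ℝ :=
  (1/16) * (t^2 - 1) *
    ((3*η - Real.sqrt (1 - c^2))^2*t^4
      + (16*(1 - c^2) - 9*(η + Real.sqrt (1 - c^2))^2 + 9*(ξ - c)^2)*t^2
      + (16 - (3*ξ + c)^2))

noncomputable def g1 (c ξ : ℝ) : ℝ :=
  2187*ξ^3 + 3807*c*ξ^2 + (1953*c^2 - 3840)*ξ + 245*c^3 - 4352*c

noncomputable def ximin (c : ℝ) : ℝ := (-5*c + 8*Real.sqrt 2*Real.sqrt (9 - c^2))/27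

noncomputable def ximax (c : ℝ) : ℝ := (4 - c)/3

/-- Sup over `t ∈ [−1,1]` of `|f t|`. -/
noncomputable def errSup (f : ℝ → ℝ) : ℝ :=
  sSup ((fun t => |f t|) '' Set.Icc (-1 : ℝ) 1)

/-!
Up to the factor `-(1 - t²)`, the radial error is a quadratic `a u² + b u + d` in `u = t²`. The
point `(ξ∨, η∨)` makes it equal to `d (4u - 1)²`: the formula for `η∨` says `a + b = 8d`, and then
`g₁(ξ∨) = 0` gives `a = 16d`. The error becomes `-d (1 - T₃(t)²)` with `T₃` the Chebyshev polynomial,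
which vanishes at `t = 1/2` and attains its extreme value `-d` at `t = 0` and `t = √3/2`.

If an inner approximant had smaller error, comparing at `t = 0` would give `ξ∨ < ξ`, and comparing
at all three points would give smaller values of both `a` and `a + b`. But a smaller `a` means
`η < η∨`, and `a + b` increases with `ξ` and decreases with `η`, a contradiction.
-/

section SupNorm

variable {f : ℝ → ℝ}

theorem abs_le_errSup (hf : ContinuousOn f (Set.Icc (-1) 1)) {t : ℝ}
    (ht : t ∈ Set.Icc (-1 : ℝ) 1) : |f t| ≤ errSup f :=
  le_csSup (isCompact_Icc.image_of_continuousOn hf.abs).bddAbove ⟨t, ht, rfl⟩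

theorem errSup_le {M : ℝ} (h : ∀ t ∈ Set.Icc (-1 : ℝ) 1, |f t| ≤ M) : errSup f ≤ M :=
  csSup_le ((Set.nonempty_Icc.2 (by norm_num)).image _) (Set.forall_mem_image.2 h)

end SupNorm

/-- The coefficient of `u²` when `psiC c t ξ η = -(1 - t²) (a u² + b u + d)` with `u = t²`. -/
noncomputable def leadCoeff (c η : ℝ) : ℝ := ((3 * η - √(1 - c ^ 2)) / 4) ^ 2

/-- The coefficient of `u` when `psiC c t ξ η = -(1 - t²) (a u² + b u + d)` with `u = t²`. -/
noncomputable def midCoeff (c ξ η : ℝ) : ℝ :=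
  (1 - c ^ 2) - 9 / 16 * (η + √(1 - c ^ 2)) ^ 2 + 9 / 16 * (ξ - c) ^ 2

/-- The radial defect of the approximant at its midpoint, `((3ξ + c)/4, 0)`; it is the
constant coefficient when `psiC c t ξ η = -(1 - t²) (a u² + b u + d)` with `u = t²`. -/
noncomputable def midpointDefect (c ξ : ℝ) : ℝ := 1 - ((3 * ξ + c) / 4) ^ 2

/-- The simplified radial error is a multiple of `1 - T₃²`, where `T₃` is the Chebyshev polynomial
of degree three. This is expressed through the coefficients `a`, `b`, `d` of
`a u² + b u + d = d (4u - 1)²`, with `b = -8d` replaced by `a + b = 8d`. -/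
structure IsEquioscillating (c ξ η : ℝ) : Prop where
  lead_eq : leadCoeff c η = 16 * midpointDefect c ξ
  lead_add_mid_eq : leadCoeff c η + midCoeff c ξ η = 8 * midpointDefect c ξ

section RadialError

variable {c ξ η ξ₀ η₀ : ℝ}

theorem one_sub_sq_pos (hc : |c| < 1) : 0 < 1 - c ^ 2 :=
  sub_pos.2 ((sq_lt_one_iff_abs_lt_one c).2 hc)

theorem sq_sqrt_one_sub_sq (hc : |c| ≤ 1) : √(1 - c ^ 2) ^ 2 = 1 - c ^ 2 :=
  Real.sq_sqrt (sub_nonneg.2 ((sq_le_one_iff_abs_le_one c).2 hc))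

theorem psiC_eq (c t ξ η : ℝ) :
    psiC c t ξ η = -((1 - t ^ 2) *
      (leadCoeff c η * (t ^ 2) ^ 2 + midCoeff c ξ η * t ^ 2 + midpointDefect c ξ)) := by
  unfold psiC leadCoeff midCoeff midpointDefect
  ring

theorem continuous_psiC (c ξ η : ℝ) : Continuous fun t => psiC c t ξ η := by
  unfold psiC
  fun_prop

theorem neg_psiC_le_errSup (c ξ η : ℝ) {t : ℝ} (ht : t ∈ Set.Icc (-1 : ℝ) 1) :
    -psiC c t ξ η ≤ errSup fun t => psiC c t ξ η :=
  (neg_le_abs _).trans (abs_le_errSup (continuous_psiC c ξ η).continuousOn ht)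

theorem midpointDefect_le_errSup (c ξ η : ℝ) :
    midpointDefect c ξ ≤ errSup fun t => psiC c t ξ η := by
  simpa [psiC_eq] using neg_psiC_le_errSup c ξ η (t := 0) (by norm_num)

theorem value_three_quarters_le_errSup (c ξ η : ℝ) :
    (1 - 3 / 4) * (leadCoeff c η * (3 / 4) ^ 2 + midCoeff c ξ η * (3 / 4) + midpointDefect c ξ) ≤
      errSup fun t => psiC c t ξ η := by
  have hsq : (√3 / 2) ^ 2 = 3 / 4 := by
    rw [div_pow, Real.sq_sqrt (by norm_num)]
    norm_num
  have hmem : √3 / 2 ∈ Set.Icc (-1 : ℝ) 1 :=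
    abs_le.1 ((sq_le_one_iff_abs_le_one _).1 (by linarith))
  simpa only [psiC_eq, hsq, neg_neg] using neg_psiC_le_errSup c ξ η hmem

theorem value_one_quarter_nonneg (h : psiC c (1 / 2) ξ η ≤ 0) :
    0 ≤ leadCoeff c η * (1 / 4) ^ 2 + midCoeff c ξ η * (1 / 4) + midpointDefect c ξ := by
  rw [psiC_eq] at h
  linarith

theorem leadCoeff_nonneg (c η : ℝ) : 0 ≤ leadCoeff c η := sq_nonneg _

theorem lt_of_leadCoeff_lt (hη₀ : √(1 - c ^ 2) ≤ 3 * η₀) (h : leadCoeff c η < leadCoeff c η₀) :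
    η < η₀ := by
  have := lt_of_pow_lt_pow_left₀ 2 (by linarith) h
  linarith

theorem lt_of_midpointDefect_lt (hsum : 0 ≤ 3 * (ξ₀ + ξ) + 2 * c)
    (h : midpointDefect c ξ < midpointDefect c ξ₀) : ξ₀ < ξ := by
  have hprod : 0 < (3 * (ξ₀ + ξ) + 2 * c) * (ξ - ξ₀) := by
    unfold midpointDefect at h
    linarith
  exact sub_pos.1 (pos_of_mul_pos_right hprod hsum)

theorem leadCoeff_add_midCoeff (hc : |c| ≤ 1) (ξ η : ℝ) :
    leadCoeff c η + midCoeff c ξ η =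
      (8 * (1 - c ^ 2) - 24 * √(1 - c ^ 2) * η + 9 * (ξ - c) ^ 2) / 16 := by
  unfold leadCoeff midCoeff
  linear_combination -1 / 2 * sq_sqrt_one_sub_sq hc

theorem leadCoeff_add_midCoeff_lt (hc : |c| < 1) (hcξ₀ : c ≤ ξ₀) (hξ : ξ₀ ≤ ξ) (hη : η < η₀) :
    leadCoeff c η₀ + midCoeff c ξ₀ η₀ < leadCoeff c η + midCoeff c ξ η := by
  have hs : 0 < √(1 - c ^ 2) := Real.sqrt_pos.2 (one_sub_sq_pos hc)
  have hξsq : (ξ₀ - c) ^ 2 ≤ (ξ - c) ^ 2 := pow_le_pow_left₀ (by linarith) (by linarith) 2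
  have hsη : √(1 - c ^ 2) * η < √(1 - c ^ 2) * η₀ := mul_lt_mul_of_pos_left hη hs
  rw [leadCoeff_add_midCoeff hc.le, leadCoeff_add_midCoeff hc.le]
  linarith

/-- The bounds are the values for the extremal quadratic `K (4u - 1)²`, which takes the
values `K`, `0`, `4K` at `0`, `1/4`, `3/4`. -/
theorem coeffs_lt_of_values_lt {a b d K : ℝ} (h_zero : d < K)
    (h_quarter : 0 ≤ a * (1 / 4) ^ 2 + b * (1 / 4) + d)
    (h_three_quarters : (1 - 3 / 4) * (a * (3 / 4) ^ 2 + b * (3 / 4) + d) < K) :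
    a < 16 * K ∧ a + b < 8 * K := by
  constructor <;> linarith

theorem one_sub_chebyshev_sq_nonneg {t : ℝ} (ht : t ∈ Set.Icc (-1 : ℝ) 1) :
    0 ≤ 1 - (4 * t ^ 3 - 3 * t) ^ 2 := by
  have hfactor : 1 - (4 * t ^ 3 - 3 * t) ^ 2 = (1 - t ^ 2) * (4 * t ^ 2 - 1) ^ 2 := by ring
  have : t ^ 2 ≤ 1 := (sq_le_one_iff_abs_le_one t).2 (abs_le.2 ht)
  rw [hfactor]
  exact mul_nonneg (by linarith) (sq_nonneg _)

namespace IsEquioscillating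

theorem midpointDefect_nonneg (h : IsEquioscillating c ξ η) : 0 ≤ midpointDefect c ξ := by
  linarith [h.lead_eq, leadCoeff_nonneg c η]

theorem psiC_eq_chebyshev (h : IsEquioscillating c ξ η) (t : ℝ) :
    psiC c t ξ η = -(midpointDefect c ξ * (1 - (4 * t ^ 3 - 3 * t) ^ 2)) := by
  have hmid : midCoeff c ξ η = -8 * midpointDefect c ξ := by
    linarith [h.lead_eq, h.lead_add_mid_eq]
  rw [psiC_eq, h.lead_eq, hmid]
  ring

theorem psiC_nonpos (h : IsEquioscillating c ξ η) {t : ℝ} (ht : t ∈ Set.Icc (-1 : ℝ) 1) :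
    psiC c t ξ η ≤ 0 := by
  rw [h.psiC_eq_chebyshev]
  exact neg_nonpos.2 (mul_nonneg h.midpointDefect_nonneg (one_sub_chebyshev_sq_nonneg ht))

theorem errSup_le_midpointDefect (h : IsEquioscillating c ξ η) :
    errSup (fun t => psiC c t ξ η) ≤ midpointDefect c ξ := by
  refine errSup_le fun t ht => ?_
  rw [abs_of_nonpos (h.psiC_nonpos ht), h.psiC_eq_chebyshev, neg_neg]
  exact mul_le_of_le_one_right h.midpointDefect_nonneg (by linarith [sq_nonneg (4 * t ^ 3 - 3 * t)])

theorem midpointDefect_le_errSup_of_inner (h : IsEquioscillating c ξ₀ η₀) (hc : |c| < 1)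
    (hη₀ : √(1 - c ^ 2) ≤ 3 * η₀) (hcξ₀ : c ≤ ξ₀) (hsum : 0 ≤ 3 * (ξ₀ + ξ) + 2 * c)
    (hinner : ∀ t ∈ Set.Icc (-1 : ℝ) 1, psiC c t ξ η ≤ 0) :
    midpointDefect c ξ₀ ≤ errSup fun t => psiC c t ξ η := by
  by_contra! hlt
  have hmid : midpointDefect c ξ < midpointDefect c ξ₀ :=
    (midpointDefect_le_errSup c ξ η).trans_lt hlt
  obtain ⟨hlead, hlead_add_mid⟩ := coeffs_lt_of_values_lt hmid
    (value_one_quarter_nonneg (hinner (1 / 2) (by norm_num)))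
    ((value_three_quarters_le_errSup c ξ η).trans_lt hlt)
  rw [← h.lead_eq] at hlead
  rw [← h.lead_add_mid_eq] at hlead_add_mid
  have hξ : ξ₀ < ξ := lt_of_midpointDefect_lt hsum hmid
  have hη : η < η₀ := lt_of_leadCoeff_lt hη₀ hlead
  exact hlead_add_mid.not_gt (leadCoeff_add_midCoeff_lt hc hcξ₀ hξ.le hη)

theorem errSup_le_errSup_of_inner (h : IsEquioscillating c ξ₀ η₀) (hc : |c| < 1)
    (hη₀ : √(1 - c ^ 2) ≤ 3 * η₀) (hcξ₀ : c ≤ ξ₀) (hsum : 0 ≤ 3 * (ξ₀ + ξ) + 2 * c)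
    (hinner : ∀ t ∈ Set.Icc (-1 : ℝ) 1, psiC c t ξ η ≤ 0) :
    errSup (fun t => psiC c t ξ₀ η₀) ≤ errSup fun t => psiC c t ξ η :=
  h.errSup_le_midpointDefect.trans (h.midpointDefect_le_errSup_of_inner hc hη₀ hcξ₀ hsum hinner)

end IsEquioscillating

theorem isEquioscillating_of_g1_eq_zero (hc : |c| < 1) (hg : g1 c ξ = 0)
    (hη : 8 * √(1 - c ^ 2) * η = 27 * ξ ^ 2 + 10 * c * ξ + 3 * c ^ 2 - 40) :
    IsEquioscillating c ξ η where
  lead_eq := by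
    have hs := sq_sqrt_one_sub_sq hc.le
    have hroot : 8 * √(1 - c ^ 2) * (3 * η - √(1 - c ^ 2)) =
        81 * ξ ^ 2 + 30 * c * ξ + 17 * c ^ 2 - 128 := by
      linear_combination 3 * hη - 8 * hs
    have hlead : 1024 * (1 - c ^ 2) * leadCoeff c η =
        (81 * ξ ^ 2 + 30 * c * ξ + 17 * c ^ 2 - 128) ^ 2 := by
      rw [← hroot, leadCoeff]
      linear_combination (-64 * (3 * η - √(1 - c ^ 2)) ^ 2) * hs
    -- Eliminating `η` from `leadCoeff = 16 * midpointDefect` leaves `3 * (ξ - c) * g1 c ξ = 0`.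
    refine mul_left_cancel₀ (mul_pos (by norm_num : (0 : ℝ) < 1024) (one_sub_sq_pos hc)).ne' ?_
    unfold g1 at hg
    unfold midpointDefect
    linear_combination hlead + 3 * (ξ - c) * hg
  lead_add_mid_eq := by
    rw [leadCoeff_add_midCoeff hc.le, midpointDefect]
    linear_combination -3 / 16 * hη

theorem four_le_sqrt_two_mul_sqrt (hc : |c| ≤ 1) : 4 ≤ √2 * √(9 - c ^ 2) := by
  rw [← Real.sqrt_mul (by norm_num)]
  exact Real.le_sqrt_of_sq_le (by linarith [(sq_le_one_iff_abs_le_one c).2 hc])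

theorem thirty_two_lt_of_ximin_lt (hc : |c| ≤ 1) (hξ : ximin c < ξ) : 32 < 27 * ξ + 5 * c := by
  unfold ximin at hξ
  linarith [four_le_sqrt_two_mul_sqrt hc]

theorem sqrt_lt_three_mul_of_ximin_lt (hc : |c| < 1) (hξ : ximin c < ξ)
    (hη : 8 * √(1 - c ^ 2) * η = 27 * ξ ^ 2 + 10 * c * ξ + 3 * c ^ 2 - 40) :
    √(1 - c ^ 2) < 3 * η := by
  have hs := sq_sqrt_one_sub_sq hc.le
  have hsq : 2 * (9 - c ^ 2) = (√2 * √(9 - c ^ 2)) ^ 2 := by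
    rw [mul_pow, Real.sq_sqrt (by norm_num), Real.sq_sqrt (by linarith [one_sub_sq_pos hc])]
  have hbound : (8 * (√2 * √(9 - c ^ 2))) ^ 2 < (27 * ξ + 5 * c) ^ 2 :=
    pow_lt_pow_left₀ (by unfold ximin at hξ; linarith) (by positivity) two_ne_zero
  refine lt_of_mul_lt_mul_left ?_ (Real.sqrt_nonneg (1 - c ^ 2))
  linarith

/-- Negative `c` corresponds to arcs longer than a semicircle. -/
theorem stmt_14_general {ξv ηv : ℝ} (hc : |c| < 1) (hmin : ximin c < ξv) (hg1 : g1 c ξv = 0)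
    (hηv : ηv = (27 * ξv ^ 2 + 10 * c * ξv + 3 * c ^ 2 - 40) / (8 * √(1 - c ^ 2))) :
    (∀ t ∈ Set.Icc (-1 : ℝ) 1, psiC c t ξv ηv ≤ 0) ∧
    ∀ ξ η : ℝ, 0 < ξ → (∀ t ∈ Set.Icc (-1 : ℝ) 1, psiC c t ξ η ≤ 0) →
      errSup (fun t => psiC c t ξv ηv) ≤ errSup (fun t => psiC c t ξ η) := by
  have hs : 0 < √(1 - c ^ 2) := Real.sqrt_pos.2 (one_sub_sq_pos hc)
  have hη : 8 * √(1 - c ^ 2) * ηv = 27 * ξv ^ 2 + 10 * c * ξv + 3 * c ^ 2 - 40 := by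
    rw [hηv, mul_div_cancel₀ _ (by positivity)]
  have hequi : IsEquioscillating c ξv ηv := isEquioscillating_of_g1_eq_zero hc hg1 hη
  have hξv : 32 < 27 * ξv + 5 * c := thirty_two_lt_of_ximin_lt hc.le hmin
  obtain ⟨hc_lower, hc_upper⟩ := abs_lt.1 hc
  exact ⟨fun t ht => hequi.psiC_nonpos ht, fun ξ η hξ hinner =>
    hequi.errSup_le_errSup_of_inner hc (sqrt_lt_three_mul_of_ximin_lt hc hmin hη).le
      (by linarith) (by linarith) hinner⟩

end RadialError

/-- `(ξ∨, η∨)` induces the optimal inner cubic G⁰ approximant. -/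
theorem stmt_14 (c : ℝ) (hc0 : 0 ≤ c) (hc1 : c < 1)
    (ξv : ℝ) (hmem : ξv ∈ Set.Ioo (ximin c) (ximax c)) (hg1 : g1 c ξv = 0)
    (ηv : ℝ) (hηv : ηv = (27*ξv^2 + 10*c*ξv + 3*c^2 - 40)/(8*Real.sqrt (1 - c^2))) :
    (∀ t ∈ Set.Icc (-1 : ℝ) 1, psiC c t ξv ηv ≤ 0) ∧
    ∀ ξ η : ℝ, 0 < ξ → (∀ t ∈ Set.Icc (-1 : ℝ) 1, psiC c t ξ η ≤ 0) →
      errSup (fun t => psiC c t ξv ηv) ≤ errSup (fun t => psiC c t ξ η) :=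
  stmt_14_general (abs_lt.2 ⟨by linarith, hc1⟩) hmem.1 hg1 hηv
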